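/- Let χ be the unique nontrivial Dirichlet character modulo 3 (so χ(n) = 1 if n ≡ 1 (mod 3), χ(n) = −1 if n ≡ 2 (mod 3), and χ(n) = 0 if 3 | n), and let L(s, χ) denote its Dirichlet L-function. Then L(0, χ) ≠ 0 and L′(0, χ)/L(0, χ) = log(2π/3) + γ − L′(1, χ)/L(1, χ), where γ is the Euler–Mascheroni constant and L′ denotes the derivative of L(s, χ) with respect to s. -/

import Mathlib

open DirichletCharacter Real
open scoped ZMod
lemma chi_odd (χ : DirichletCharacter ℂ 3) (hχ : χ ≠ 1) : χ (-1) = -1 := by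
  rcases χ.even_or_odd with h | h
  · exfalso
    apply hχ
    ext u
    rw [MulChar.one_apply_coe]
    have : ∀ u : (ZMod 3)ˣ, (u : ZMod 3) = 1 ∨ (u : ZMod 3) = -1 := by decide
    rcases this u with h' | h' <;> rw [h']
    · simp
    · exact h
  · exact h

lemma dft_chi (χ : DirichletCharacter ℂ 3) (hχ : χ ≠ 1) :
    ∃ g : ℂ, g ≠ 0 ∧ 𝓕 (χ : ZMod 3 → ℂ) = fun x ↦ g * χ x := by
  have ho : DirichletCharacter.Odd χ := chi_odd χ hχ
  have hf : (𝓕 (χ : ZMod 3 → ℂ)).Odd := ZMod.dft_odd_iff.mpr ho.to_fun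
  have key : 𝓕 (χ : ZMod 3 → ℂ) = fun x ↦ 𝓕 (χ : ZMod 3 → ℂ) 1 * χ x := by
    funext x
    have : ∀ x : ZMod 3, x = 0 ∨ x = 1 ∨ x = -1 := by decide
    rcases this x with rfl | rfl | rfl
    · rw [hf.map_zero, ho.to_fun.map_zero, mul_zero]
    · simp
    · rw [hf 1, chi_odd χ hχ]; ring
  refine ⟨_, fun h0 ↦ ?_, key⟩
  rw [h0] at key
  have : (χ : ZMod 3 → ℂ) = 0 := by
    apply ZMod.dft.injective
    rw [key, map_zero]; ext; simp
  have := congrFun this 1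
  simp at this

lemma LF_const (χ : DirichletCharacter ℂ 3) (g s : ℂ) :
    ZMod.LFunction (fun x ↦ g * χ x) s = g * LFunction χ s := by
  simp only [LFunction, ZMod.LFunction, mul_assoc, ← Finset.mul_sum]
  ring

lemma fe (χ : DirichletCharacter ℂ 3) (hχ : χ ≠ 1) :
    ∃ g : ℂ, g ≠ 0 ∧ ∀ s : ℂ, 0 < s.re → LFunction χ (1 - s) =
      g * ((3 : ℂ) ^ (s - 1) * (2 * π : ℂ) ^ (-s) * Complex.Gamma s *
        Complex.sin (π * s / 2) * LFunction χ s) := by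
  obtain ⟨g, hg, h⟩ := dft_chi χ hχ
  have hneg : (fun x ↦ χ (-x)) = -(χ : ZMod 3 → ℂ) := by
    funext x
    rw [← neg_one_mul, map_mul, chi_odd χ hχ]; simp
  have h2 : 𝓕 (fun x ↦ χ (-x)) = fun x ↦ (-g) * χ x := by
    rw [hneg, map_neg, h]; ext; simp
  refine ⟨g * (2 * Complex.I), by simp [hg], fun s hs ↦ ?_⟩
  have := ZMod.LFunction_one_sub (χ : ZMod 3 → ℂ) (s := s) (fun n hn ↦ by
      rw [hn] at hs; simp at hs
      have : (0:ℝ) ≤ n := n.cast_nonneg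
      linarith) (Or.inl (DirichletCharacter.map_zero' χ (by norm_num)))
  rw [h, h2, LF_const, LF_const] at this
  rw [show LFunction χ (1 - s) = ZMod.LFunction χ (1 - s) from rfl, this, Complex.sin,
    show (π : ℂ) * Complex.I * s / 2 = π * s / 2 * Complex.I by ring,
    show -(π : ℂ) * Complex.I * s / 2 = -(π * s / 2) * Complex.I by ring]
  push_cast
  linear_combination (-g * (3 : ℂ) ^ (s - 1) * (2 * π : ℂ) ^ (-s) * Complex.Gamma s * LFunction χ s *
    (Complex.exp (-(π * s / 2) * Complex.I) - Complex.exp ((π * s / 2) * Complex.I))) * Complex.I_sq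

/-- For the unique nontrivial Dirichlet character `χ` mod 3, one has `L(0, χ) ≠ 0` and
`L′(0, χ)/L(0, χ) = log(2π/3) + γ − L′(1, χ)/L(1, χ)`, where `γ` is the
Euler–Mascheroni constant. -/
theorem stmt_19 (χ : DirichletCharacter ℂ 3) (hχ : χ ≠ 1) :
    LFunction χ 0 ≠ 0 ∧
      deriv (LFunction χ) 0 / LFunction χ 0 =
        (Real.log (2 * Real.pi / 3) : ℂ) + (Real.eulerMascheroniConstant : ℂ) -
          deriv (LFunction χ) 1 / LFunction χ 1 := by
  obtain ⟨g, hg, h⟩ := fe χ hχ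
  have hpi : (π : ℂ) ≠ 0 := by exact_mod_cast Real.pi_ne_zero
  have hL1 : LFunction χ 1 ≠ 0 := LFunction_ne_zero_of_one_le_re χ (Or.inl hχ) (by simp)
  have h0 : LFunction χ 0 = g * ((2 * π : ℂ)⁻¹ * LFunction χ 1) := by
    have := h 1 (by simp)
    simpa [Complex.cpow_neg_one] using this
  have hD := differentiable_LFunction hχ
  have hl : HasDerivAt (fun s ↦ LFunction χ (1 - s)) (deriv (LFunction χ) 0 * (-1)) 1 := by
    have h1 : HasDerivAt (fun s : ℂ ↦ 1 - s) (-1) 1 := by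
      simpa using (hasDerivAt_id (1:ℂ)).const_sub 1
    have h2 : HasDerivAt (LFunction χ) (deriv (LFunction χ) 0) (1 - 1) := by
      rw [sub_self]; exact (hD 0).hasDerivAt
    exact h2.comp 1 h1
  have hr1 : HasDerivAt (fun s : ℂ ↦ (3 : ℂ) ^ (s - 1)) (Complex.log 3) 1 := by
    simpa using ((hasDerivAt_id (1:ℂ)).sub_const 1).const_cpow (c := 3) (Or.inl (by norm_num))
  have hr2 : HasDerivAt (fun s : ℂ ↦ (2 * π : ℂ) ^ (-s))
      (-((2 * π : ℂ)⁻¹ * Complex.log (2 * π))) 1 := by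
    have := (hasDerivAt_id (1:ℂ)).neg.const_cpow (c := (2 * π : ℂ)) (Or.inl (by simp [hpi]))
    simpa [Complex.cpow_neg_one] using! this
  have hr3 := Complex.hasDerivAt_Gamma_one
  have hr4 : HasDerivAt (fun s : ℂ ↦ Complex.sin (π * s / 2)) 0 1 := by
    have := (((hasDerivAt_id (1:ℂ)).const_mul (π : ℂ)).div_const 2).csin
    simpa using! this
  have hr := ((((hr1.mul hr2).mul hr3).mul hr4).mul (hD 1).hasDerivAt).const_mul g
  have heq : (fun s ↦ LFunction χ (1 - s)) =ᶠ[nhds 1] _ :=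
    Filter.eventually_of_mem ((isOpen_lt continuous_const Complex.continuous_re).mem_nhds
      (by simp : (0:ℝ) < (1:ℂ).re)) (fun s hs ↦ h s hs)
  have hu := hl.unique (hr.congr_of_eventuallyEq heq)
  simp [Complex.cpow_neg_one] at hu
  have hne : LFunction χ 0 ≠ 0 := by rw [h0]; simp [hg, hpi, hL1]
  refine ⟨hne, ?_⟩
  have hlog : ((Real.log (2 * π / 3) : ℝ) : ℂ) = Complex.log (2 * π) - Complex.log 3 := by
    rw [Real.log_div (by positivity) (by norm_num)]
    push_cast [Complex.ofReal_log (show (0:ℝ) ≤ 2 * π by positivity), Complex.ofReal_log (show (0:ℝ) ≤ 3 by norm_num)]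
    rfl
  rw [hlog, div_eq_iff hne, h0]
  generalize Complex.log (2 * π) = l at hu ⊢
  field_simp
  field_simp at hu
  linear_combination -hu
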